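/- Fix l ≥ 1 and κ = (k_1,…,k_l) ∈ (ℤ/2ℤ)^l, and let λ be an l-multipartition of d. Then every standard λ-tableau t satisfies deg(t) ≡ ε(λ) (mod 2). Equivalently, the Laurent polynomial Σ_{t standard λ-tableau} q^{deg(t)} (which is the graded dimension of the Specht module S(λ) of the cyclotomic KLR algebra in quantum characteristic 2) has non-zero coefficients only in degrees congruent to ε(λ) modulo 2. -/

import Mathlib

/-!
Core definitions: multipartitions, Young diagrams, tableaux, degrees,
in quantum characteristic 2 (residues in ℤ/2ℤ).
Nodes are 0-indexed: the node `(m, a, b)` denotes the box in component `m`,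
row `a+1`, column `b+1` of the paper's 1-indexed conventions.
-/

/-- A node: (component, row, column), all 0-indexed. -/
abbrev Node (l : ℕ) := Fin l × ℕ × ℕ

namespace Cyclo

variable {l d : ℕ}

/-- Residue of a node `(m, a, b)`: `κ m + (b - a)` in `ℤ/2ℤ`. -/
def res (κ : Fin l → ZMod 2) (N : Node l) : ZMod 2 :=
  κ N.1 + (N.2.2 : ZMod 2) - (N.2.1 : ZMod 2)

/-- A set of nodes is (the Young diagram of) a multipartition iff it is
downward closed in rows and columns within each component. -/
def IsDiagram (Y : Set (Node l)) : Prop :=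
  ∀ m a b a' b', (m, a, b) ∈ Y → a' ≤ a → b' ≤ b → (m, a', b') ∈ Y

/-- `M` is an addable node for the diagram `Y`. -/
def Addable (Y : Set (Node l)) (M : Node l) : Prop :=
  M ∉ Y ∧ IsDiagram (insert M Y)

/-- `M` is a removable node of the diagram `Y`. -/
def Removable (Y : Set (Node l)) (M : Node l) : Prop :=
  M ∈ Y ∧ IsDiagram (Y \ {M})

/-- `M` is below `N`: strictly later component, or same component and strictly lower row. -/
def Below (N M : Node l) : Prop :=
  N.1 < M.1 ∨ (N.1 = M.1 ∧ N.2.1 < M.2.1)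

/-- `d_N(Y)`: number of addable nodes for `Y` below `N` of the same residue as `N`,
minus the number of removable nodes of `Y` below `N` of the same residue as `N`. -/
noncomputable def dN (κ : Fin l → ZMod 2) (Y : Set (Node l)) (N : Node l) : ℤ :=
  ({M | Addable Y M ∧ res κ M = res κ N ∧ Below N M}.ncard : ℤ)
    - ({M | Removable Y M ∧ res κ M = res κ N ∧ Below N M}.ncard : ℤ)

/-- The Young diagram of the multipartition whose parts are `lam m a` (0-indexed rows). -/
def diagram (lam : Fin l → ℕ → ℕ) : Set (Node l) :=
  {N | N.2.2 < lam N.1 N.2.1}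

/-- `lam` encodes an `l`-multipartition of `d`: each component is a partition
(antitone, vanishing beyond row `d`) and the sizes sum to `d`. -/
def IsMultipartition (lam : Fin l → ℕ → ℕ) (d : ℕ) : Prop :=
  (∀ m, Antitone (lam m)) ∧ (∀ m a, d ≤ a → lam m a = 0) ∧
    ∑ m : Fin l, ∑ a ∈ Finset.range d, lam m a = d

/-- A λ-tableau, encoded by the function sending `r : Fin d` to the node
occupied by the entry `r + 1`: a bijective filling of the diagram by `1, …, d`. -/
def IsTableau (lam : Fin l → ℕ → ℕ) (t : Fin d → Node l) : Prop :=
  Function.Injective t ∧ Set.range t = diagram lam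

/-- A standard λ-tableau: entries increase along rows and down columns of each
component. -/
def IsStandard (lam : Fin l → ℕ → ℕ) (t : Fin d → Node l) : Prop :=
  IsTableau lam t ∧
    ∀ r s : Fin d, (t r).1 = (t s).1 → (t r).2.1 ≤ (t s).2.1 →
      (t r).2.2 ≤ (t s).2.2 → r ≤ s

/-- Lexicographic (row-reading) order on nodes. -/
def NodeLt (N M : Node l) : Prop :=
  N.1 < M.1 ∨ (N.1 = M.1 ∧ (N.2.1 < M.2.1 ∨ (N.2.1 = M.2.1 ∧ N.2.2 < M.2.2)))

/-- The row-reading tableau `t^λ`: entries `1, …, d` are filled along successive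
rows of the components of `λ`, taking the components in order. -/
def IsRowReading (lam : Fin l → ℕ → ℕ) (t : Fin d → Node l) : Prop :=
  IsTableau lam t ∧ ∀ r s : Fin d, r < s → NodeLt (t r) (t s)

/-- The degree of a (standard) tableau: `deg t = Σ_r d_{N_r}(shape of t_{≤ r})`,
which unfolds the recursion `deg t = d_N(λ) + deg (t_{≤ d-1})`, `deg ∅ = 0`. -/
noncomputable def deg (κ : Fin l → ZMod 2) (t : Fin d → Node l) : ℤ :=
  ∑ r : Fin d, dN κ (t '' {s | s ≤ r}) (t r)

/-- `ε` of a single partition (the sum of `⌊λ_a/2⌋` over rows), as a natural number. -/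
def epsPart (d : ℕ) (p : ℕ → ℕ) : ℕ :=
  ∑ a ∈ Finset.range d, p a / 2

/-- `n_i` of a single partition `p` placed in a component with offset `k`:
the number of nodes `(a,b)` of `p` with `k + b - a = i` in `ℤ/2ℤ`. -/
noncomputable def nNodes (k i : ZMod 2) (p : ℕ → ℕ) : ℕ :=
  {N : ℕ × ℕ | N.2 < p N.1 ∧ k + (N.2 : ZMod 2) - (N.1 : ZMod 2) = i}.ncard

/-- The parity `ε(λ)` of an `l`-multipartition. -/
noncomputable def eps (κ : Fin l → ZMod 2) (d : ℕ) (lam : Fin l → ℕ → ℕ) : ZMod 2 :=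
  ((∑ m : Fin l, epsPart d (lam m) : ℕ) : ZMod 2) +
    ((∑ j : Fin l, ∑ m : Fin l, if j < m then nNodes (κ j) (κ m) (lam j) else 0 : ℕ) : ZMod 2)

end Cyclo

/-!
Modulo `2` the contribution `d_N(Y)` of the last entry of a tableau of shape `Y` depends only on its
node `N = (m, a, b)`, not on `Y`: it is `b` plus the number of components after `m` whose offset is
the residue of `N`. Summing this over the nodes of `λ` gives `ε(λ)`, because
`0 + 1 + ⋯ + (n - 1) ≡ ⌊n/2⌋`.

To compute `d_N(Y)`, pair the removable node of row `a`, of length `p a`, with the addable node of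
row `a + 1`. They are both present or both absent, and their residues agree exactly when
`p a ≡ p (a + 1)`, so the signed count of `i`-corners telescopes down the rows of a component.
-/

namespace Cyclo

open Finset

variable {l d : ℕ} {κ : Fin l → ZMod 2} {k i : ZMod 2} {p : ℕ → ℕ} {lam : Fin l → ℕ → ℕ}
  {Y : Set (Node l)} {N : Node l} {t : Fin d → Node l} {a : ℕ}

theorem ncard_eq_sum_card_of_mem_iff {ι α β : Type*} [Fintype ι] {S : Set (ι × α × β)}
    (R : ι → Finset α) (c : ι → α → β) (hS : ∀ m a b, (m, a, b) ∈ S ↔ a ∈ R m ∧ b = c m a) :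
    S.ncard = ∑ m, #(R m) := by
  have himage : S = (fun x : Σ _ : ι, α => (x.1, x.2, c x.1 x.2)) '' (univ.sigma R : Finset _) := by
    ext ⟨m, a, b⟩
    rw [hS]
    aesop
  rw [himage, Set.ncard_image_of_injective, Set.ncard_coe_finset, card_sigma]
  rintro ⟨m, a⟩ ⟨m', a'⟩ h
  aesop

theorem sum_natCast_range_zmod_two (n : ℕ) : ∑ b ∈ range n, (b : ZMod 2) = (n / 2 : ℕ) := by
  induction n with
  | zero => simp
  | succ n ih =>
    have hhalves : (n + 1) / 2 + n / 2 = n := by omega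
    rw [sum_range_succ, ih, ← Nat.cast_add, ZMod.natCast_eq_natCast_iff']
    omega

theorem mem_diagram : N ∈ diagram lam ↔ N.2.2 < lam N.1 N.2.1 := Iff.rfl

theorem isDiagram_diagram (hlam : ∀ m, Antitone (lam m)) : IsDiagram (diagram lam) :=
  fun m _ _ _ _ h ha hb => hb.trans_lt (lt_of_lt_of_le h (hlam m ha))

theorem addable_diagram_iff (hlam : ∀ m, Antitone (lam m)) {m : Fin l} {a b : ℕ} :
    Addable (diagram lam) (m, a, b) ↔ b = lam m a ∧ ∀ a' < a, lam m a < lam m a' := by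
  constructor
  · rintro ⟨hnot, hins⟩
    have hb : b = lam m a := by
      refine (not_lt.mp hnot).antisymm' (not_lt.mp fun hlt => ?_)
      have := hins m a b a (lam m a) (Set.mem_insert _ _) le_rfl hlt.le
      simp [mem_diagram, hlt.ne] at this
    refine ⟨hb, fun a' ha' => ?_⟩
    have := hins m a b a' b (Set.mem_insert _ _) ha'.le le_rfl
    simpa [mem_diagram, ha'.ne, hb] using this
  · rintro ⟨rfl, hlt⟩
    refine ⟨lt_irrefl (lam m a), ?_⟩
    rintro m' a' b' a'' b'' (heq | hmem) ha hb
    · obtain ⟨rfl, rfl, rfl⟩ : m' = m ∧ a' = a ∧ b' = lam m a := by simpa using heq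
      rcases ha.eq_or_lt with rfl | ha
      · rcases hb.eq_or_lt with rfl | hb
        · exact Set.mem_insert _ _
        · exact Set.mem_insert_of_mem _ hb
      · exact Set.mem_insert_of_mem _ (hb.trans_lt (hlt a'' ha))
    · exact Set.mem_insert_of_mem _ (isDiagram_diagram hlam _ _ _ _ _ hmem ha hb)

theorem removable_diagram_iff (hlam : ∀ m, Antitone (lam m)) {m : Fin l} {a b : ℕ} :
    Removable (diagram lam) (m, a, b) ↔ lam m a = b + 1 ∧ lam m (a + 1) < lam m a := by
  constructor
  · rintro ⟨hmem, hrem⟩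
    have hright : lam m a ≤ b + 1 := not_lt.mp fun hlt =>
      (hrem m a (b + 1) a b ⟨hlt, by simp⟩ le_rfl b.le_succ).2 rfl
    have hbelow : lam m (a + 1) ≤ b := not_lt.mp fun hlt =>
      (hrem m (a + 1) b a b ⟨hlt, by simp⟩ a.le_succ le_rfl).2 rfl
    exact ⟨hright.antisymm hmem, hbelow.trans_lt hmem⟩
  · rintro ⟨hb, hlt⟩
    refine ⟨(Nat.lt_succ_self b).trans_eq hb.symm, fun m' a' b' a'' b'' hmem ha hb' =>
      ⟨isDiagram_diagram hlam _ _ _ _ _ hmem.1 ha hb', fun heq => hmem.2 ?_⟩⟩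
    obtain ⟨rfl, rfl, rfl⟩ : m' = m ∧ a'' = a ∧ b'' = b := by simpa using heq
    have hb'' : b' < lam m' a' := hmem.1
    rcases ha.eq_or_lt with rfl | ha
    · have : b' = b'' := by omega
      rw [this, Set.mem_singleton_iff]
    · have : lam m' a' ≤ lam m' (a'' + 1) := hlam m' ha
      omega

theorem exists_antitone_eq_diagram (hY : IsDiagram Y) (hfin : Y.Finite) :
    ∃ lam : Fin l → ℕ → ℕ, (∀ m, Antitone (lam m)) ∧ Y = diagram lam := by
  have hne (m : Fin l) (a : ℕ) : {b | (m, a, b) ∉ Y}.Nonempty :=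
    (hfin.preimage (f := fun b => (m, a, b)) (by intro; simp)).infinite_compl.nonempty
  have hlt (m : Fin l) (a b : ℕ) : (m, a, b) ∈ Y ↔ b < sInf {b | (m, a, b) ∉ Y} := by
    refine ⟨fun hb => not_le.mp fun hle => Nat.sInf_mem (hne m a) ?_,
      fun hb => not_not.mp (Nat.notMem_of_lt_sInf hb)⟩
    exact hY m a b a _ hb le_rfl hle
  refine ⟨fun m a => sInf {b | (m, a, b) ∉ Y}, fun m a a' ha => ?_, Set.ext fun _ => hlt _ _ _⟩
  refine le_of_forall_lt fun b hb => ?_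
  rw [← hlt] at hb ⊢
  exact hY m a' b a b hb ha le_rfl

theorem exists_row_eq_zero (hfin : (diagram lam).Finite) : ∃ n, ∀ m, lam m n = 0 := by
  obtain ⟨n, hn⟩ := (hfin.image fun M => M.2.1).bddAbove
  refine ⟨n + 1, fun m => Nat.eq_zero_of_not_pos fun hpos => ?_⟩
  have : n + 1 ≤ n := hn ⟨(m, n + 1, 0), hpos, rfl⟩
  omega

/-- Row `a` of the partition `p`, placed in a component with offset `k`, has an addable `i`-node. -/
def AddableRow (k i : ZMod 2) (p : ℕ → ℕ) (a : ℕ) : Prop :=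
  (∀ a' < a, p a < p a') ∧ k + p a - a = i

/-- Row `a` of the partition `p`, placed in a component with offset `k`, has a removable `i`-node.
The column `p a - 1` of that node is computed in `ZMod 2`, so nothing is truncated. -/
def RemovableRow (k i : ZMod 2) (p : ℕ → ℕ) (a : ℕ) : Prop :=
  p (a + 1) < p a ∧ k + (p a - 1) - a = i

instance : DecidablePred (AddableRow k i p) := fun _ => inferInstanceAs (Decidable (_ ∧ _))

instance : DecidablePred (RemovableRow k i p) := fun _ => inferInstanceAs (Decidable (_ ∧ _))

/-- The number of addable `i`-nodes minus the number of removable `i`-nodes in row `a` of the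
partition `p` placed in a component with offset `k`, modulo `2`. -/
def cornerDiff (k i : ZMod 2) (p : ℕ → ℕ) (a : ℕ) : ZMod 2 :=
  (if AddableRow k i p a then 1 else 0) - (if RemovableRow k i p a then 1 else 0)

theorem AddableRow.le (h : AddableRow k i p a) {n : ℕ} (hn : p n = 0) : a ≤ n :=
  not_lt.mp fun hlt => absurd (h.1 n hlt) (by simp [hn])

theorem RemovableRow.le (hp : Antitone p) (h : RemovableRow k i p a) {n : ℕ} (hn : p n = 0) :
    a ≤ n :=
  not_lt.mp fun hlt => absurd (h.1.trans_le (hp hlt.le)) (by simp [hn])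

theorem ite_addableRow_zero (k i : ZMod 2) (p : ℕ → ℕ) :
    (if AddableRow k i p 0 then 1 else 0 : ZMod 2) = (if k = i then 1 else 0) - p 0 := by
  simp only [AddableRow, Nat.not_lt_zero, false_imp_iff, implies_true, true_and, Nat.cast_zero,
    sub_zero]
  generalize (p 0 : ZMod 2) = u
  revert k i u
  decide

theorem ite_addableRow_succ (k i : ZMod 2) (hp : Antitone p) (a : ℕ) :
    (if AddableRow k i p (a + 1) then 1 else 0 : ZMod 2) =
      p a - p (a + 1) + if RemovableRow k i p a then 1 else 0 := by
  have hcorner : (∀ a' < a + 1, p (a + 1) < p a') ↔ p (a + 1) < p a :=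
    ⟨fun h => h a a.lt_succ_self, fun h a' ha' => h.trans_le (hp (Nat.le_of_lt_succ ha'))⟩
  simp only [AddableRow, RemovableRow, hcorner]
  by_cases hlt : p (a + 1) < p a
  · simp only [hlt, true_and, Nat.cast_succ]
    generalize (p (a + 1) : ZMod 2) = u, (p a : ZMod 2) = v, (a : ZMod 2) = w
    revert k i u v w
    decide
  · simp [(hp a.le_succ).eq_of_not_lt hlt]

theorem sum_cornerDiff_range_succ (k i : ZMod 2) (hp : Antitone p) (n : ℕ) :
    ∑ a ∈ range (n + 1), cornerDiff k i p a =
      (if k = i then 1 else 0) - p n - if RemovableRow k i p n then 1 else 0 := by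
  induction n with
  | zero => rw [zero_add, sum_range_one, cornerDiff, ite_addableRow_zero]
  | succ n ih =>
    rw [sum_range_succ, ih, cornerDiff, ite_addableRow_succ k i hp]
    ring

theorem sum_cornerDiff_of_eq_zero (k i : ZMod 2) (hp : Antitone p) {n : ℕ} (hn : p n = 0) :
    ∑ a ∈ range (n + 1), cornerDiff k i p a = if k = i then 1 else 0 := by
  simp [sum_cornerDiff_range_succ k i hp, RemovableRow, hn]

theorem sum_cornerDiff_below_removableRow (hp : Antitone p) {n : ℕ} (hn : p n = 0)
    (ha : RemovableRow k i p a) :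
    ∑ a' ∈ range (n + 1) with a < a', cornerDiff k i p a' = p a - 1 := by
  have hle : a ≤ n := ha.le hp hn
  have hsplit := sum_filter_add_sum_filter_not (range (n + 1)) (a < ·) (cornerDiff k i p)
  have habove : {a' ∈ range (n + 1) | ¬ a < a'} = range (a + 1) := by
    ext a'
    simp only [mem_filter, mem_range]
    omega
  rw [habove, sum_cornerDiff_range_succ k i hp, sum_cornerDiff_of_eq_zero k i hp hn, if_pos ha]
    at hsplit
  rw [eq_sub_of_add_eq hsplit, CharTwo.sub_eq_add (p a : ZMod 2)]
  ring

instance (N M : Node l) : Decidable (Below N M) := inferInstanceAs (Decidable (_ ∨ _))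

/-- The rows up to `n` of component `m` that lie below the node `N`. Since `Below` ignores
columns, column `0` stands for the whole row. -/
def rowsBelow (N : Node l) (n : ℕ) (m : Fin l) : Finset ℕ :=
  {a ∈ range (n + 1) | Below N (m, a, 0)}

theorem mem_rowsBelow {n : ℕ} {m : Fin l} {a : ℕ} (b : ℕ) :
    a ∈ rowsBelow N n m ↔ a ≤ n ∧ Below N (m, a, b) := by
  rw [rowsBelow, mem_filter, mem_range, Nat.lt_succ_iff]
  rfl

theorem Removable.removableRow (hN : Removable (diagram lam) N) (hlam : ∀ m, Antitone (lam m)) :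
    RemovableRow (κ N.1) (res κ N) (lam N.1) N.2.1 := by
  obtain ⟨hcol, hcorner⟩ := (removable_diagram_iff hlam).mp hN
  exact ⟨hcorner, by simp [res, hcol]⟩

theorem ncard_addable_below (hlam : ∀ m, Antitone (lam m)) {n : ℕ} (hn : ∀ m, lam m n = 0) :
    {M | Addable (diagram lam) M ∧ res κ M = i ∧ Below N M}.ncard =
      ∑ m, #{a ∈ rowsBelow N n m | AddableRow (κ m) i (lam m) a} := by
  refine ncard_eq_sum_card_of_mem_iff _ lam fun m a b => ?_
  rw [Set.mem_ofPred_eq, addable_diagram_iff hlam, mem_filter, mem_rowsBelow b]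
  constructor
  · rintro ⟨⟨rfl, hcorner⟩, hres, hbelow⟩
    have hrow : AddableRow (κ m) i (lam m) a := ⟨hcorner, hres⟩
    exact ⟨⟨⟨hrow.le (hn m), hbelow⟩, hrow⟩, rfl⟩
  · rintro ⟨⟨⟨-, hbelow⟩, hcorner, hres⟩, rfl⟩
    exact ⟨⟨rfl, hcorner⟩, hres, hbelow⟩

theorem ncard_removable_below (hlam : ∀ m, Antitone (lam m)) {n : ℕ} (hn : ∀ m, lam m n = 0) :
    {M | Removable (diagram lam) M ∧ res κ M = i ∧ Below N M}.ncard =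
      ∑ m, #{a ∈ rowsBelow N n m | RemovableRow (κ m) i (lam m) a} := by
  refine ncard_eq_sum_card_of_mem_iff _ (fun m a => lam m a - 1) fun m a b => ?_
  rw [Set.mem_ofPred_eq, mem_filter, mem_rowsBelow b]
  constructor
  · rintro ⟨hrem, rfl, hbelow⟩
    have hrow : RemovableRow (κ m) _ (lam m) a := hrem.removableRow hlam
    have hcol := ((removable_diagram_iff hlam).mp hrem).1
    exact ⟨⟨⟨hrow.le (hlam m) (hn m), hbelow⟩, hrow⟩, by omega⟩
  · rintro ⟨⟨⟨-, hbelow⟩, hcorner, hres⟩, rfl⟩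
    have hcol : lam m a = lam m a - 1 + 1 := by omega
    refine ⟨(removable_diagram_iff hlam).mpr ⟨hcol, hcorner⟩, ?_, hbelow⟩
    rw [← hres, res, Nat.cast_pred (by omega)]

theorem dN_diagram_eq_sum_cornerDiff (hlam : ∀ m, Antitone (lam m)) {n : ℕ}
    (hn : ∀ m, lam m n = 0) :
    (dN κ (diagram lam) N : ZMod 2) =
      ∑ m, ∑ a ∈ rowsBelow N n m, cornerDiff (κ m) (res κ N) (lam m) a := by
  simp only [dN, ncard_addable_below hlam hn, ncard_removable_below hlam hn, cornerDiff,
    sum_sub_distrib, sum_boole, Int.cast_sub, Int.cast_natCast, Nat.cast_sum, Int.cast_sum]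

theorem sum_cornerDiff_rowsBelow (hlam : ∀ m, Antitone (lam m)) {n : ℕ} (hn : ∀ m, lam m n = 0)
    (hN : Removable (diagram lam) N) (m : Fin l) :
    ∑ a ∈ rowsBelow N n m, cornerDiff (κ m) (res κ N) (lam m) a =
      (if m = N.1 then (N.2.2 : ZMod 2) else 0) + if N.1 < m ∧ κ m = res κ N then 1 else 0 := by
  rcases lt_trichotomy m N.1 with hlt | rfl | hgt
  · simp [rowsBelow, Below, hlt.not_gt, hlt.ne, hlt.ne']
  · have hcol := ((removable_diagram_iff hlam).mp hN).1
    have hsum := sum_cornerDiff_below_removableRow (hlam N.1) (hn N.1)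
      (hN.removableRow (κ := κ) hlam)
    simpa [rowsBelow, Below, hcol] using hsum
  · simpa [rowsBelow, Below, hgt, hgt.ne'] using sum_cornerDiff_of_eq_zero _ _ (hlam m) (hn m)

/-- The parity of `d_N(Y)` for a removable node `N` of a diagram `Y`, which depends on `N` only. -/
def nodeParity (κ : Fin l → ZMod 2) (N : Node l) : ZMod 2 :=
  N.2.2 + #{m | N.1 < m ∧ κ m = res κ N}

theorem dN_eq_nodeParity (hY : IsDiagram Y) (hfin : Y.Finite) (hN : Removable Y N) :
    (dN κ Y N : ZMod 2) = nodeParity κ N := by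
  obtain ⟨lam, hlam, rfl⟩ := exists_antitone_eq_diagram hY hfin
  obtain ⟨n, hn⟩ := exists_row_eq_zero hfin
  rw [dN_diagram_eq_sum_cornerDiff hlam hn,
    sum_congr rfl fun m _ => sum_cornerDiff_rowsBelow hlam hn hN m, sum_add_distrib, sum_boole,
    sum_ite_eq' univ N.1, if_pos (mem_univ _), nodeParity]

theorem IsStandard.isDiagram_image (ht : IsStandard lam t) (hlam : ∀ m, Antitone (lam m))
    {s : Set (Fin d)} (hs : IsLowerSet s) : IsDiagram (t '' s) := by
  rintro m a b a' b' ⟨r, hr, hrt⟩ ha hb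
  have hmem : (m, a', b') ∈ Set.range t := by
    rw [ht.1.2]
    refine isDiagram_diagram hlam m a b a' b' ?_ ha hb
    rw [← ht.1.2, ← hrt]
    exact Set.mem_range_self r
  obtain ⟨r', hrt'⟩ := hmem
  refine ⟨r', hs (ht.2 r' r ?_ ?_ ?_) hr, hrt'⟩ <;> simp [hrt, hrt', ha, hb]

theorem IsStandard.removable_image_Iic (ht : IsStandard lam t) (hlam : ∀ m, Antitone (lam m))
    (r : Fin d) : Removable (t '' Set.Iic r) (t r) := by
  refine ⟨Set.mem_image_of_mem t Set.self_mem_Iic, ?_⟩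
  rw [← Set.image_singleton, ← Set.image_sdiff ht.1.1, Set.Iic_sdiff_right]
  exact ht.isDiagram_image hlam (isLowerSet_Iio r)

theorem IsStandard.deg_eq_sum_nodeParity (ht : IsStandard lam t) (hlam : ∀ m, Antitone (lam m)) :
    (deg κ t : ZMod 2) = ∑ r, nodeParity κ (t r) := by
  rw [deg, Int.cast_sum]
  exact sum_congr rfl fun r _ => dN_eq_nodeParity (ht.isDiagram_image hlam (isLowerSet_Iic r))
    (Set.toFinite _) (ht.removable_image_Iic hlam r)

/-- The boxes in the first `d` rows of the partition `p`. -/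
def cells (d : ℕ) (p : ℕ → ℕ) : Finset (ℕ × ℕ) :=
  (range d).biUnion fun a => {a} ×ˢ range (p a)

theorem mem_cells {x : ℕ × ℕ} : x ∈ cells d p ↔ x.1 ∈ range d ∧ x.2 ∈ range (p x.1) := by
  obtain ⟨a, b⟩ := x
  simp [cells]

theorem mem_cells_iff_lt (hp : ∀ a, d ≤ a → p a = 0) {x : ℕ × ℕ} :
    x ∈ cells d p ↔ x.2 < p x.1 := by
  rw [mem_cells, mem_range, mem_range, and_iff_right_iff_imp]
  exact fun hx => not_le.mp fun hle => by simp [hp _ hle] at hx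

theorem sum_cells_column (d : ℕ) (p : ℕ → ℕ) :
    ∑ x ∈ cells d p, (x.2 : ZMod 2) = epsPart d p := by
  rw [sum_finset_product (cells d p) (range d) (fun a => range (p a)) fun _ => mem_cells]
  simp only [sum_natCast_range_zmod_two, epsPart, Nat.cast_sum]

theorem nNodes_eq_card_filter_cells (k i : ZMod 2) (hp : ∀ a, d ≤ a → p a = 0) :
    nNodes k i p = #{x ∈ cells d p | k + (x.2 : ZMod 2) - x.1 = i} := by
  rw [nNodes, ← Set.ncard_coe_finset]
  congr 1
  ext x
  simp [mem_cells_iff_lt hp]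

theorem IsTableau.sum_eq_sum_cells {α : Type*} [AddCommMonoid α] (ht : IsTableau lam t)
    (hlam : ∀ m a, d ≤ a → lam m a = 0) (f : Node l → α) :
    ∑ r, f (t r) = ∑ m, ∑ x ∈ cells d (lam m), f (m, x) := by
  refine (sum_map univ ⟨t, ht.1⟩ f).symm.trans (sum_finset_product _ _ _ fun M => ?_)
  have hM : M ∈ Set.range t ↔ M ∈ diagram lam := by rw [ht.2]
  simpa [mem_cells_iff_lt (hlam M.1), mem_diagram] using hM

theorem sum_cells_nodeParity (κ : Fin l → ZMod 2) (j : Fin l) (hp : ∀ a, d ≤ a → p a = 0) :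
    ∑ x ∈ cells d p, nodeParity κ (j, x) =
      epsPart d p + ∑ m, if j < m then (nNodes (κ j) (κ m) p : ZMod 2) else 0 := by
  simp only [nodeParity, sum_add_distrib, sum_cells_column, natCast_card_filter]
  rw [sum_comm]
  congr 1
  refine sum_congr rfl fun m _ => ?_
  rw [nNodes_eq_card_filter_cells _ _ hp, natCast_card_filter]
  by_cases hjm : j < m <;> simp [hjm, res, eq_comm]

end Cyclo

open Cyclo in
/-- **Theorem 1 of the paper.** For any `l`-multipartition `λ` of
`d` (`l ≥ 1`), every standard `λ`-tableau `t` satisfies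
`deg(t) ≡ ε(λ) (mod 2)`.  Equivalently, the graded dimension
`Σ_t q^{deg t}` of the Specht module `S(λ)` has non-zero coefficients only in
degrees congruent to `ε(λ)` modulo `2`. -/
theorem statement3 (l d : ℕ) (hl : 1 ≤ l)
    (κ : Fin l → ZMod 2) (lam : Fin l → ℕ → ℕ)
    (hlam : IsMultipartition lam d)
    (t : Fin d → Node l) (ht : IsStandard lam t) :
    ((deg κ t : ℤ) : ZMod 2) = eps κ d lam := by
  calc (deg κ t : ZMod 2)
      = ∑ r, nodeParity κ (t r) := ht.deg_eq_sum_nodeParity hlam.1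
    _ = ∑ j, ∑ x ∈ cells d (lam j), nodeParity κ (j, x) := ht.1.sum_eq_sum_cells hlam.2.1 _
    _ = ∑ j, (epsPart d (lam j) +
          ∑ m, if j < m then (nNodes (κ j) (κ m) (lam j) : ZMod 2) else 0) :=
        Finset.sum_congr rfl fun j _ => sum_cells_nodeParity κ j (hlam.2.1 j)
    _ = eps κ d lam := by
        rw [Finset.sum_add_distrib, eps]
        push_cast
        rfl
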